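/- Let V = F_2^3 and let Aff(V) = V ⋊ GL_3(F_2) be the affine group of V, acting on V by (v, A) · w = v + Aw. Then Aff(V) contains exactly 8 transitive subgroups isomorphic to the simple group GL_3(F_2) of order 168, and any two such subgroups are conjugate by an element of GL_3(F_2) ≤ Aff(V). -/

import Mathlib

/-- The vector space `𝔽_p^n`. -/
abbrev V (p n : ℕ) : Type := Fin n → ZMod p

/-- The affine group `Aff(V) = V ⋊ GL(V)` of `V = 𝔽_p^n`, realised as the group of
affine self-equivalences of `V`; the pair `(v, A)` corresponds to `w ↦ A w + v` and
acts on `V` by evaluation. -/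
abbrev Aff (p n : ℕ) : Type := V p n ≃ᵃ[ZMod p] V p n

/-!
A group isomorphic to `GL₃(𝔽₂)` has no nontrivial normal subgroup of exponent two consisting of
commuting elements, so such a `G ≤ Aff(V)` meets the translations trivially and, by counting,
is a complement `{(σ(A), A)}` for a 1-cocycle `σ`. The cohomology `H¹(GL₃(𝔽₂), 𝔽₂³)` is `𝔽₂`:
the Steinberg relations between elementary transvections determine `σ` up to a coboundary and a
scalar, and the nontrivial class arises from the anisotropic cubic form `N` over `𝔽₂` in three
variables. The polar form of `N` is bilinear up to the invariant triple product, so its change under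
`A` is an alternating form, that is, a vector `κ(A)`. A complement in the trivial class fixes a
point. The complements in the class of `κ` are transitive because `κ` is surjective; they are the
translation conjugates of one of them, and distinct because `GL₃(𝔽₂)` has no nonzero fixed vector.
By transitivity, a conjugating element can be corrected to fix `0`, hence to be linear.
-/

open groupCohomology
open scoped Pointwise

section AffineGroup

variable {R M : Type*} [Ring R] [AddCommGroup M] [Module R M]

/-- A group of affine automorphisms acts transitively on the points of its module. -/
def ActsTransitively (G : Subgroup (M ≃ᵃ[R] M)) : Prop :=
  ∀ v w, ∃ g ∈ G, g v = w

lemma affineEquiv_apply_eq_linear_add (g : M ≃ᵃ[R] M) (x y : M) :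
    g x = g.linear (x - y) + g y := by
  simpa using g.map_vadd y (x - y)

lemma affineEquiv_ext_of_linear {g h : M ≃ᵃ[R] M} (hlin : g.linear = h.linear) (x : M)
    (hx : g x = h x) : g = h := by
  ext y
  rw [affineEquiv_apply_eq_linear_add g y x, affineEquiv_apply_eq_linear_add h y x, hlin, hx]

lemma actsTransitively_of_forall_mem_orbit {G : Subgroup (M ≃ᵃ[R] M)} (x : M)
    (h : ∀ v, ∃ g ∈ G, g x = v) : ActsTransitively G := by
  intro v w
  obtain ⟨g, hg, rfl⟩ := h v
  obtain ⟨k, hk, rfl⟩ := h w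
  exact ⟨k * g⁻¹, mul_mem hk (inv_mem hg), congrArg k (g.symm_apply_apply x)⟩

lemma ActsTransitively.conj_smul {G : Subgroup (M ≃ᵃ[R] M)} (hG : ActsTransitively G)
    (a : M ≃ᵃ[R] M) : ActsTransitively (MulAut.conj a • G) := by
  intro v w
  obtain ⟨g, hg, hgvw⟩ := hG (a⁻¹ v) (a⁻¹ w)
  refine ⟨_, Subgroup.smul_mem_pointwise_smul g (MulAut.conj a) G hg, ?_⟩
  exact (congrArg a hgvw).trans (a.apply_symm_apply w)

/-- Correct the conjugating element by an element of the second group so that it fixes `0`. -/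
lemma ActsTransitively.exists_linear_conj {G H : Subgroup (M ≃ᵃ[R] M)} (hH : ActsTransitively H)
    {a : M ≃ᵃ[R] M} (ha : MulAut.conj a • G = H) :
    ∃ A : M ≃ₗ[R] M, MulAut.conj A.toAffineEquiv • G = H := by
  obtain ⟨h, hh, hha⟩ := hH (a 0) 0
  have hlin : (h * a).linear.toAffineEquiv = h * a :=
    affineEquiv_ext_of_linear rfl 0 ((map_zero (h * a).linear).trans hha.symm)
  refine ⟨(h * a).linear, ?_⟩
  rw [hlin, map_mul, mul_smul, ha, Subgroup.conj_smul_eq_self_of_mem hh]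

/-- The complement `{(σ(A), A)}` of the translation subgroup determined by a 1-cocycle `σ` of the
general linear group. -/
def affineComplement {σ : (M ≃ₗ[R] M) → M} (hσ : IsCocycle₁ σ) : Subgroup (M ≃ᵃ[R] M) where
  carrier := {g | g 0 = σ g.linear}
  one_mem' := (map_one_of_isCocycle₁ hσ).symm
  mul_mem' {g h} hg hh := by
    change g (h 0) = σ (g.linear * h.linear)
    rw [affineEquiv_apply_eq_linear_add g (h 0) 0, sub_zero, hg, hh, hσ, LinearEquiv.smul_def]
  inv_mem' {g} hg := by
    change g.symm 0 = σ g.linear⁻¹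
    have hσinv : g.linear (σ g.linear⁻¹) = -g 0 := by
      rw [← LinearEquiv.smul_def, map_inv_of_isCocycle₁ hσ, hg]
    have h0 := affineEquiv_apply_eq_linear_add g (g.symm 0) 0
    rw [g.apply_symm_apply, sub_zero, eq_comm, ← eq_neg_iff_add_eq_zero, ← hσinv] at h0
    exact g.linear.injective h0

variable {σ τ : (M ≃ₗ[R] M) → M} (hσ : IsCocycle₁ σ) (hτ : IsCocycle₁ τ)

lemma mem_affineComplement {g : M ≃ᵃ[R] M} : g ∈ affineComplement hσ ↔ g 0 = σ g.linear :=
  Iff.rfl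

lemma mem_conj_constVAdd_smul_affineComplement {g : M ≃ᵃ[R] M} {w : M} :
    g ∈ MulAut.conj (AffineEquiv.constVAdd R M w) • affineComplement hσ ↔
      g w = σ g.linear + w := by
  have hlin : ((AffineEquiv.constVAdd R M w)⁻¹ * g * AffineEquiv.constVAdd R M w).linear =
      g.linear := rfl
  have hzero : ((AffineEquiv.constVAdd R M w)⁻¹ * g * AffineEquiv.constVAdd R M w) 0 =
      -w + g w := by simp [AffineEquiv.inv_def]
  rw [Subgroup.mem_pointwise_smul_iff_inv_smul_mem, ← map_inv, MulAut.smul_def,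
    MulAut.conj_apply, inv_inv, mem_affineComplement, hlin, hzero, neg_add_eq_iff_eq_add,
    add_comm w]

/-- An affine complement is isomorphic to the general linear group, by taking linear parts. -/
def affineComplementEquiv : affineComplement hσ ≃* (M ≃ₗ[R] M) where
  toFun g := g.1.linear
  invFun A := ⟨AffineEquiv.ofLinearEquiv A 0 (σ A), by simp [mem_affineComplement]⟩
  left_inv g := Subtype.ext <| affineEquiv_ext_of_linear rfl 0 <| by
    simp [(mem_affineComplement hσ).1 g.2]
  right_inv _ := rfl
  map_mul' _ _ := rfl

lemma exists_isCocycle₁_affineComplement_eq {G : Subgroup (M ≃ᵃ[R] M)}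
    (hG : Function.Bijective (AffineEquiv.linearHom.comp G.subtype)) :
    ∃ (σ : (M ≃ₗ[R] M) → M) (hσ : IsCocycle₁ σ), affineComplement hσ = G := by
  let e : G ≃* (M ≃ₗ[R] M) := MulEquiv.ofBijective _ hG
  have he (A : M ≃ₗ[R] M) : (e.symm A).1.linear = A := e.apply_symm_apply A
  have hσ : IsCocycle₁ fun A => (e.symm A).1 0 := fun A B => by
    have hA := affineEquiv_apply_eq_linear_add (e.symm A).1 ((e.symm B).1 0) 0
    rw [he, sub_zero] at hA
    rw [LinearEquiv.smul_def, ← hA]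
    exact congrArg (fun g : G => g.1 0) (map_mul e.symm A B)
  refine ⟨_, hσ, ?_⟩
  ext g
  rw [mem_affineComplement]
  constructor
  · intro hg
    rw [affineEquiv_ext_of_linear (he g.linear).symm 0 hg]
    exact (e.symm g.linear).2
  · intro hg
    exact congrArg (fun h : G => h.1 0) (e.symm_apply_apply ⟨g, hg⟩).symm

lemma exists_conj_smul_affineComplement_eq (h : IsCoboundary₁ (τ - σ)) :
    ∃ w, MulAut.conj (AffineEquiv.constVAdd R M w) • affineComplement hσ = affineComplement hτ := by
  obtain ⟨x, hx⟩ := h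
  refine ⟨-x, ?_⟩
  ext g
  rw [mem_conj_constVAdd_smul_affineComplement, mem_affineComplement,
    affineEquiv_apply_eq_linear_add g (-x) 0, sub_zero, map_neg,
    ← sub_add_cancel (τ g.linear) (σ g.linear), ← Pi.sub_apply, ← hx, LinearEquiv.smul_def]
  grind

lemma actsTransitively_affineComplement (hσsurj : Function.Surjective σ) :
    ActsTransitively (affineComplement hσ) := by
  refine actsTransitively_of_forall_mem_orbit 0 fun v => ?_
  obtain ⟨A, rfl⟩ := hσsurj v
  exact ⟨AffineEquiv.ofLinearEquiv A 0 (σ A), ((affineComplementEquiv hσ).symm A).2, by simp⟩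

/-- If `σ(A) = A x - x`, then the complement fixes the point `-x`. -/
lemma not_actsTransitively_of_isCoboundary₁ [Nontrivial M] (h : IsCoboundary₁ σ) :
    ¬ ActsTransitively (affineComplement hσ) := by
  obtain ⟨x, hx⟩ := h
  intro htrans
  obtain ⟨y, hy⟩ := exists_ne (-x)
  obtain ⟨g, hg, hgy⟩ := htrans (-x) y
  refine hy (hgy.symm.trans ?_)
  rw [affineEquiv_apply_eq_linear_add g (-x) 0, sub_zero, (mem_affineComplement hσ).1 hg, ← hx,
    LinearEquiv.smul_def, map_neg]
  abel

lemma conj_constVAdd_smul_affineComplement_injective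
    (hfix : ∀ v : M, (∀ A : M ≃ₗ[R] M, A v = v) → v = 0) :
    Function.Injective fun w =>
      MulAut.conj (AffineEquiv.constVAdd R M w) • affineComplement hσ := by
  intro w w' h
  refine (sub_eq_zero.1 <| hfix (w' - w) fun A => ?_).symm
  let g := AffineEquiv.ofLinearEquiv A w (σ A + w)
  have hg : g ∈ MulAut.conj (AffineEquiv.constVAdd R M w) • affineComplement hσ :=
    (mem_conj_constVAdd_smul_affineComplement hσ).2 (by simp [g])
  have hg' : A (w' - w) + (σ A + w) = σ A + w' :=
    (mem_conj_constVAdd_smul_affineComplement hσ).1 ((SetLike.ext_iff.1 h g).1 hg)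
  rwa [add_left_comm, add_right_inj, ← eq_sub_iff_add_eq] at hg'

end AffineGroup

section NormalInvolutions

variable {K W : Type*} [Field K] [AddCommGroup W] [Module K W]

lemma exists_linearEquiv_swap {u v : W} (huv : LinearIndependent K ![u, v]) :
    ∃ b : W ≃ₗ[K] W, b u = v ∧ b v = u := by
  have huv' : LinearIndependent K ![u, -v] := by
    rw [LinearIndependent.pair_iff] at huv ⊢
    intro s t hst
    simpa using huv s (-t) (by simpa using hst)
  obtain ⟨f, hf⟩ := Module.exists_dual_forall_apply_eq_one (linearIndepOn_univ_iff.2 huv')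
  have hfu : f u = 1 := hf 0 trivial
  have hfv : f v = -1 := by simpa [neg_eq_iff_eq_neg] using hf 1 trivial
  have hf2 : f (u - v) = 2 := by rw [map_sub, hfu, hfv]; norm_num
  exact ⟨Module.reflection hf2, by simp [Module.reflection_apply, hfu],
    by simp [Module.reflection_apply, hfv]⟩

/-- If `u = a v - v ≠ 0`, then conjugating `a` by an automorphism that swaps `u` and `v` gives an
automorphism that does not commute with `a`. -/
lemma eq_one_of_commute_conj {a : W ≃ₗ[K] W} (ha : ∀ v, a (a v - v) = a v - v)
    (hcomm : ∀ b : W ≃ₗ[K] W, Commute a (b * a * b⁻¹)) : a = 1 := by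
  ext v
  by_contra hv
  obtain ⟨u, hu⟩ : ∃ u, u = a v - v := ⟨_, rfl⟩
  have hav : a v = u + v := by rw [hu, sub_add_cancel]
  have hau : a u = u := by rw [hu, ha]
  have hu0 : u ≠ 0 := by rw [hu]; exact sub_ne_zero.2 hv
  have huv : LinearIndependent K ![u, v] := by
    rw [LinearIndependent.pair_iff' hu0]
    rintro c rfl
    exact hv (by rw [map_smul, hau]; rfl)
  obtain ⟨b, hbu, hbv⟩ := exists_linearEquiv_swap huv
  have hbu' : b⁻¹ u = v := b.symm_apply_eq.2 hbv.symm
  have := congrArg (fun f : W ≃ₗ[K] W => f u) (hcomm b).eq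
  simp [LinearEquiv.mul_apply, hau, hav, hbu, hbv, hbu', hu0] at this

variable {R M : Type*} [Ring R] [CharP R 2] [AddCommGroup M] [Module R M] [CharP K 2]

lemma linearHom_comp_subtype_injective_of_mulEquiv {G : Subgroup (M ≃ᵃ[R] M)}
    (e : G ≃* (W ≃ₗ[K] W)) :
    Function.Injective (AffineEquiv.linearHom.comp G.subtype) := by
  set L : G →* (M ≃ₗ[R] M) := AffineEquiv.linearHom.comp G.subtype
  have translation {g : G} (hg : g ∈ L.ker) : ∃ t, g.1 = AffineEquiv.constVAdd R M t :=
    ⟨g.1 0, affineEquiv_ext_of_linear hg 0 (by simp)⟩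
  refine (injective_iff_map_eq_one L).2 fun g hg => ?_
  obtain ⟨t, ht⟩ := translation hg
  have hsq : g * g = 1 := by
    ext x : 2
    simp [ht, ← add_assoc, ← two_smul R t, CharTwo.two_eq_zero]
  have hcomm (h : G) : Commute g (h * g * h⁻¹) := by
    obtain ⟨s, hs⟩ := translation (L.normal_ker.conj_mem g hg h)
    refine Subtype.ext ?_
    simp only [Subgroup.coe_mul, ht, hs]
    ext x
    simp [add_left_comm]
  rw [← e.map_eq_one_iff]
  refine eq_one_of_commute_conj (fun v => ?_) fun b => ?_
  · have hv : e g (e g v) = v := by rw [← LinearEquiv.mul_apply, ← map_mul, hsq, map_one]; rfl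
    have neg_eq (x : W) : -x = x := by
      rw [neg_eq_iff_add_eq_zero, ← two_smul K, CharTwo.two_eq_zero, zero_smul]
    rw [map_sub, hv, ← neg_sub, neg_eq]
  · obtain ⟨h, rfl⟩ := e.surjective b
    simpa using (hcomm h).map e

end NormalInvolutions

section ElementaryTransvections

open Matrix

variable {n R : Type*} [DecidableEq n] [CommRing R]

variable (R) in
/-- The elementary transvection `x ↦ x + x_j e_i`. -/
def elementary {i j : n} (h : i ≠ j) : (n → R) ≃ₗ[R] (n → R) :=
  LinearEquiv.transvection (f := LinearMap.proj j) (v := Pi.single i 1) (by simp [h.symm])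

lemma elementary_apply {i j : n} (h : i ≠ j) (x : n → R) :
    elementary R h x = x + Pi.single i (x j) := by
  ext k
  simp [elementary, LinearMap.transvection.apply, Pi.single_apply]

lemma toMatrix'_elementary [Fintype n] {i j : n} (h : i ≠ j) :
    LinearMap.toMatrix' (elementary R h : (n → R) →ₗ[R] (n → R)) = transvection i j 1 := by
  ext k l
  simp only [LinearMap.toMatrix'_apply, LinearEquiv.coe_coe, elementary_apply, transvection,
    Matrix.add_apply, one_apply, single_apply, Pi.add_apply, Pi.single_apply]
  grind

lemma eq_zero_or_one_of_zmod_two : ∀ c : ZMod 2, c = 0 ∨ c = 1 := by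
  decide

lemma closure_elementary_eq_top [Finite n] :
    Subgroup.closure {A | ∃ (i j : n) (h : i ≠ j), elementary (ZMod 2) h = A} = ⊤ := by
  have := Fintype.ofFinite n
  refine (Subgroup.eq_top_iff' _).2 fun A => ?_
  set S := {A | ∃ (i j : n) (h : i ≠ j), elementary (ZMod 2) h = A}
  suffices H : ∃ B ∈ Subgroup.closure S, LinearMap.toMatrix' B.toLinearMap =
      LinearMap.toMatrix' A.toLinearMap by
    obtain ⟨B, hB, hBA⟩ := H
    rwa [← LinearEquiv.toLinearMap_injective (LinearMap.toMatrix'.injective hBA)]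
  have hA : (LinearMap.toMatrix' A.toLinearMap).det ≠ 0 := by
    rw [LinearMap.det_toMatrix']
    exact A.isUnit_det'.ne_zero
  refine diagonal_transvection_induction_of_det_ne_zero
    (fun M => ∃ B ∈ Subgroup.closure S, LinearMap.toMatrix' B.toLinearMap = M) _ hA ?_ ?_ ?_
  · intro D hD
    have hD_one : D = 1 := by
      rw [det_diagonal, Finset.prod_ne_zero_iff] at hD
      exact funext fun i => Fin.eq_one_of_ne_zero _ (hD i (Finset.mem_univ i))
    exact ⟨1, one_mem _, by simp [hD_one]⟩
  · rintro ⟨i, j, hij, c⟩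
    obtain rfl | rfl := eq_zero_or_one_of_zmod_two c
    · exact ⟨1, one_mem _, by simp⟩
    · exact ⟨_, Subgroup.subset_closure ⟨i, j, hij, rfl⟩, toMatrix'_elementary hij⟩
  · rintro _ _ - - ⟨B, hB, rfl⟩ ⟨C, hC, rfl⟩
    exact ⟨B * C, mul_mem hB hC, LinearMap.toMatrix'_mul _ _⟩

omit [DecidableEq n] in
lemma eq_zero_of_forall_linearEquiv_apply_eq [Nontrivial n] {v : n → R}
    (hv : ∀ A : (n → R) ≃ₗ[R] (n → R), A v = v) : v = 0 := by
  classical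
  ext j
  obtain ⟨i, hij⟩ := exists_ne j
  simpa [elementary_apply] using congrFun (hv (elementary R hij)) i

end ElementaryTransvections

section CocycleRelations

lemma isCoboundary₁_of_closure_eq_top {G A : Type*} [Group G] [AddCommGroup A]
    [DistribMulAction G A] {f : G → A} (hf : IsCocycle₁ f) {S : Set G}
    (hS : Subgroup.closure S = ⊤) {x : A} (hx : ∀ g ∈ S, g • x - x = f g) :
    IsCoboundary₁ f := by
  refine ⟨x, fun g => ?_⟩
  have hg : g ∈ Subgroup.closure S := hS ▸ Subgroup.mem_top g
  induction hg using Subgroup.closure_induction with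
  | mem g hg => exact hx g hg
  | one => rw [map_one_of_isCocycle₁ hf, one_smul, sub_self]
  | mul g h _ _ hg hh => rw [hf, ← hg, ← hh, mul_smul, smul_sub, sub_add_sub_cancel]
  | inv g _ hg =>
    rw [← (MulAction.injective g).eq_iff, map_inv_of_isCocycle₁ hf, ← hg, smul_sub,
      smul_inv_smul, neg_sub]

variable {n R : Type*} [DecidableEq n] [CommRing R]
  {σ : ((n → R) ≃ₗ[R] (n → R)) → n → R} (hσ : IsCocycle₁ σ) {i j k : n}
include hσ

lemma cocycle_elementary_comm (hij : i ≠ j) (hik : i ≠ k) :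
    σ (elementary R hik) j = σ (elementary R hij) k := by
  have hcomm : elementary R hij * elementary R hik = elementary R hik * elementary R hij := by
    ext x : 1
    simp [elementary_apply, hij, hik, add_right_comm]
  have := congrFun (congrArg σ hcomm) i
  simp only [hσ _ _, LinearEquiv.smul_def, elementary_apply, Pi.add_apply,
    Pi.single_eq_same] at this
  linear_combination this

variable [CharP R 2]

lemma cocycle_elementary_source (hij : i ≠ j) : σ (elementary R hij) j = 0 := by
  have hsq : elementary R hij * elementary R hij = 1 := by
    ext x : 1
    simp [elementary_apply, hij, add_assoc, ← Pi.single_add, CharTwo.add_self_eq_zero]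
  have := congrFun (congrArg σ hsq) i
  simp only [hσ _ _, map_one_of_isCocycle₁ hσ, LinearEquiv.smul_def, elementary_apply,
    Pi.add_apply, Pi.single_eq_same, Pi.zero_apply, add_right_comm, CharTwo.add_self_eq_zero,
    zero_add] at this
  exact this

lemma cocycle_elementary_commutator (hij : i ≠ j) (hik : i ≠ k) (hjk : j ≠ k) :
    σ (elementary R hjk) j = σ (elementary R hik) i + σ (elementary R hij) k := by
  have hcomm : elementary R hij * elementary R hjk =
      elementary R hik * elementary R hjk * elementary R hij := by
    ext x : 1
    simp [elementary_apply, hik, hjk.symm, Pi.single_add, add_left_comm, add_assoc]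
  have := congrFun (congrArg σ hcomm) i
  simp only [hσ _ _, LinearEquiv.smul_def, LinearEquiv.mul_apply, elementary_apply, Pi.add_apply,
    Pi.single_eq_same, Pi.single_eq_of_ne hij, Pi.single_eq_of_ne hjk.symm,
    cocycle_elementary_source hσ hjk] at this
  linear_combination this

lemma cocycle_elementary_swap (hij : i ≠ j) (hik : i ≠ k) (hjk : j ≠ k) :
    σ (elementary R hij) k = σ (elementary R hij.symm) k := by
  have h₁ := cocycle_elementary_commutator hσ hij hik hjk
  have h₂ := cocycle_elementary_commutator hσ hij.symm hjk hik
  rw [← CharTwo.add_eq_zero]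
  linear_combination -h₁ - h₂

end CocycleRelations

section CocyclesOfRankThree

variable (R : Type*) [CommRing R]

/-- The value at the elementary transvection `x ↦ x + x_j e_i` of the 1-cocycle that spans the
first cohomology; a coboundary has been subtracted so that the values have entries `0` and `1`. -/
def elementaryCocycleValue (i j : Fin 3) : Fin 3 → R :=
  fun k => if k = j then 0 else if k = i then if j = i + 1 then 1 else 0 else 1

variable {R} [CharP R 2] {σ : ((Fin 3 → R) ≃ₗ[R] (Fin 3 → R)) → Fin 3 → R} (hσ : IsCocycle₁ σ)
include hσ

lemma cocycle_elementary_eq_const {i j k : Fin 3} (hij : i ≠ j) (hik : i ≠ k) (hjk : j ≠ k) :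
    σ (elementary R hij) k = σ (elementary R (zero_ne_one : (0 : Fin 3) ≠ 1)) 2 := by
  have swap {i j k : Fin 3} (hij : i ≠ j) := cocycle_elementary_swap hσ (k := k) hij
  have comm {i j k : Fin 3} (hij : i ≠ j) := cocycle_elementary_comm hσ (k := k) hij
  fin_cases i <;> fin_cases j <;> fin_cases k <;> grind

lemma exists_cocycle_elementary_eq : ∃ (c : R) (x : Fin 3 → R), ∀ {i j : Fin 3} (hij : i ≠ j),
    σ (elementary R hij) = Pi.single i (x j) + c • elementaryCocycleValue R i j := by
  have succ_ne (j : Fin 3) : j + 1 ≠ j := by simp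
  refine ⟨σ (elementary R (zero_ne_one : (0 : Fin 3) ≠ 1)) 2,
    fun j => σ (elementary R (succ_ne j)) (j + 1), fun {i j} hij => funext fun l => ?_⟩
  simp only [elementaryCocycleValue, Pi.add_apply, Pi.smul_apply, smul_eq_mul, mul_ite, mul_one,
    mul_zero]
  obtain rfl | hlj := eq_or_ne l j
  · simp [cocycle_elementary_source hσ, hij]
  obtain rfl | hli := eq_or_ne l i
  · obtain rfl | rfl : l = j + 1 ∨ j = l + 1 := by grind
    · simp [add_assoc]
    · have hl : l + 1 + 1 ≠ l := by grind
      rw [cocycle_elementary_commutator hσ hl (succ_ne (l + 1)) hij,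
        cocycle_elementary_eq_const hσ hl (succ_ne (l + 1)) hij]
      simp
  · simp [hlj, hli, cocycle_elementary_eq_const hσ hij hli.symm hlj.symm]

end CocyclesOfRankThree

section TripleProduct

open Matrix

variable {R : Type*} [CommRing R]

/-- The vector `x` representing an alternating form on `R³` as the triple product
`B u w = det (u, w, x)`. -/
def axialVector (B : LinearMap.BilinForm R (Fin 3 → R)) : Fin 3 → R :=
  fun k => B (Pi.single (k + 1) 1) (Pi.single (k + 2) 1)

lemma apply_eq_det_axialVector {B : LinearMap.BilinForm R (Fin 3 → R)} (hB : B.IsAlt)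
    (u w : Fin 3 → R) : B u w = det (of ![u, w, axialVector B]) := by
  conv_lhs => rw [pi_eq_sum_univ' u, pi_eq_sum_univ' w]
  simp only [Fin.sum_univ_three, map_add, map_smul, LinearMap.add_apply, LinearMap.smul_apply,
    hB.self_eq_zero, ← hB.neg_eq (Pi.single 0 1) (Pi.single 1 1),
    ← hB.neg_eq (Pi.single 1 1) (Pi.single 2 1), ← hB.neg_eq (Pi.single 2 1) (Pi.single 0 1),
    det_fin_three, axialVector, of_apply, cons_val, smul_eq_mul, Fin.isValue, zero_add,
    Fin.reduceAdd]
  ring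

lemma det_single_single (k : Fin 3) (v : Fin 3 → R) :
    det (of ![Pi.single (k + 1) 1, Pi.single (k + 2) 1, v]) = v k := by
  fin_cases k <;> simp [det_fin_three]

lemma det_map (f : (Fin 3 → R) →ₗ[R] (Fin 3 → R)) (u v w : Fin 3 → R) :
    det (of ![f u, f v, f w]) = LinearMap.det f * det (of ![u, v, w]) := by
  have hf : ![f u, f v, f w] = f ∘ ![u, v, w] := by
    ext i
    fin_cases i <;> rfl
  rw [hf, ← Pi.basisFun_det_apply, ← Pi.basisFun_det_apply, Module.Basis.det_comp]

end TripleProduct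

section CubicCocycle

open Matrix

/-- The polar form `(u, w) ↦ ∂_w N(u)` of the anisotropic cubic form
`N = x³ + y³ + z³ + x²y + y²z + z²x + xyz` over `𝔽₂`. -/
def cubicPolar (u w : V 2 3) : ZMod 2 :=
  w 0 * (u 1 * u 2 + u 2 + u 0) + w 1 * (u 0 * u 2 + u 0 + u 1) + w 2 * (u 0 * u 1 + u 1 + u 2)

lemma cubicPolar_add_right (u w w' : V 2 3) :
    cubicPolar u (w + w') = cubicPolar u w + cubicPolar u w' := by
  simp only [cubicPolar, Pi.add_apply]
  ring

lemma cubicPolar_add_left (u u' w : V 2 3) :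
    cubicPolar (u + u') w = cubicPolar u w + cubicPolar u' w + det (of ![u, u', w]) := by
  have two : (2 : ZMod 2) = 0 := rfl
  simp only [cubicPolar, Pi.add_apply, det_fin_three, of_apply, cons_val]
  linear_combination (w 0 * u 2 * u' 1 + w 1 * u 0 * u' 2 + w 2 * u 1 * u' 0) * two

/-- Euler's identity `∂_u N(u) = 3 N(u) = N(u)`, where `N` vanishes only at `0`. -/
lemma cubicPolar_self {u : V 2 3} (hu : u ≠ 0) : cubicPolar u u = 1 := by
  decide +revert

lemma cubicPolar_zero_left (w : V 2 3) : cubicPolar 0 w = 0 := by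
  simp [cubicPolar]

variable (A B : V 2 3 ≃ₗ[ZMod 2] V 2 3)

lemma det_linearEquiv_map (u v w : V 2 3) :
    det (of ![A u, A v, A w]) = det (of ![u, v, w]) := by
  have hA : LinearMap.det A.toLinearMap = 1 := Fin.eq_one_of_ne_zero _ A.isUnit_det'.ne_zero
  simpa [hA] using det_map A.toLinearMap u v w

/-- The change of `cubicPolar` under the linear substitution `A⁻¹`. It is bilinear although
`cubicPolar` is not, because `A` preserves the triple product in `cubicPolar_add_left`. -/
def polarDefect : LinearMap.BilinForm (ZMod 2) (V 2 3) :=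
  LinearMap.mk₂ (ZMod 2) (fun u w => cubicPolar (A.symm u) (A.symm w) - cubicPolar u w)
    (fun u u' w => by
      rw [map_add, cubicPolar_add_left, cubicPolar_add_left, det_linearEquiv_map A.symm]
      ring)
    (fun c u w => by
      obtain rfl | rfl := eq_zero_or_one_of_zmod_two c <;> simp [cubicPolar_zero_left])
    (fun u w w' => by
      rw [map_add, cubicPolar_add_right, cubicPolar_add_right]
      ring)
    (fun c u w => by
      simp only [map_smul, cubicPolar, Pi.smul_apply, smul_eq_mul]
      ring)

lemma polarDefect_apply (u w : V 2 3) :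
    polarDefect A u w = cubicPolar (A.symm u) (A.symm w) - cubicPolar u w := rfl

lemma isAlt_polarDefect : (polarDefect A).IsAlt := by
  intro u
  rw [polarDefect_apply]
  obtain rfl | hu := eq_or_ne u 0
  · simp [cubicPolar_zero_left]
  · rw [cubicPolar_self hu, cubicPolar_self (A.symm.map_ne_zero_iff.2 hu), sub_self]

lemma polarDefect_mul (u w : V 2 3) :
    polarDefect (A * B) u w = polarDefect B (A.symm u) (A.symm w) + polarDefect A u w :=
  (sub_add_sub_cancel _ _ _).symm

/-- The 1-cocycle of `GL₃(𝔽₂)` that measures the failure of the anisotropic cubic form to be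
invariant. -/
def cubicCocycle : V 2 3 :=
  axialVector (polarDefect A)

lemma isCocycle₁_cubicCocycle : IsCocycle₁ cubicCocycle := by
  intro A B
  ext k
  calc cubicCocycle (A * B) k
    _ = det (of ![A.symm (Pi.single (k + 1) 1), A.symm (Pi.single (k + 2) 1), cubicCocycle B]) +
        cubicCocycle A k := by
      rw [cubicCocycle, axialVector, polarDefect_mul,
        apply_eq_det_axialVector (isAlt_polarDefect B)]
      rfl
    _ = A (cubicCocycle B) k + cubicCocycle A k := by
      rw [← det_linearEquiv_map A, A.apply_symm_apply, A.apply_symm_apply, det_single_single]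

lemma cubicCocycle_elementary {i j : Fin 3} (h : i ≠ j) :
    cubicCocycle (elementary (ZMod 2) h) = elementaryCocycleValue (ZMod 2) i j := by
  decide +revert

lemma cubicCocycle_surjective : Function.Surjective cubicCocycle := by
  have values : ∀ v : V 2 3, v = 0 ∨ v = 1 ∨
      ∃ i j : Fin 3, i ≠ j ∧ v = elementaryCocycleValue (ZMod 2) i j := by
    decide
  intro v
  obtain rfl | rfl | ⟨i, j, h, rfl⟩ := values v
  · exact ⟨1, map_one_of_isCocycle₁ isCocycle₁_cubicCocycle⟩
  · refine ⟨elementary _ (i := 1) (j := 0) (by decide) *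
      elementary _ (i := 2) (j := 1) (by decide), ?_⟩
    rw [isCocycle₁_cubicCocycle, cubicCocycle_elementary, cubicCocycle_elementary]
    decide
  · exact ⟨elementary _ h, cubicCocycle_elementary h⟩

lemma exists_isCoboundary₁_sub_smul_cubicCocycle {σ : (V 2 3 ≃ₗ[ZMod 2] V 2 3) → V 2 3}
    (hσ : IsCocycle₁ σ) : ∃ c : ZMod 2, IsCoboundary₁ (σ - c • cubicCocycle) := by
  obtain ⟨c, x, hx⟩ := exists_cocycle_elementary_eq hσ
  have hτ : IsCocycle₁ (σ - c • cubicCocycle) := by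
    intro A B
    simp only [Pi.sub_apply, Pi.smul_apply, hσ A B, isCocycle₁_cubicCocycle A B, smul_add, smul_sub,
      smul_comm A c]
    abel
  refine ⟨c, isCoboundary₁_of_closure_eq_top hτ closure_elementary_eq_top (x := x) ?_⟩
  rintro _ ⟨i, j, hij, rfl⟩
  rw [Pi.sub_apply, Pi.smul_apply, hx hij, cubicCocycle_elementary, LinearEquiv.smul_def,
    elementary_apply, add_sub_cancel_left, add_sub_cancel_right]

end CubicCocycle

section TransitiveSubgroups

/-- The complement of the translations determined by `cubicCocycle`, conjugated by the translation
by `w`. -/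
def cubicComplement (w : V 2 3) : Subgroup (Aff 2 3) :=
  MulAut.conj (AffineEquiv.constVAdd (ZMod 2) (V 2 3) w) • affineComplement isCocycle₁_cubicCocycle

lemma actsTransitively_cubicComplement (w : V 2 3) : ActsTransitively (cubicComplement w) :=
  (actsTransitively_affineComplement _ cubicCocycle_surjective).conj_smul _

lemma cubicComplement_injective : Function.Injective cubicComplement :=
  conj_constVAdd_smul_affineComplement_injective _ fun _ => eq_zero_of_forall_linearEquiv_apply_eq

lemma conj_smul_cubicComplement (w w' : V 2 3) :
    MulAut.conj (AffineEquiv.constVAdd (ZMod 2) (V 2 3) w' *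
      (AffineEquiv.constVAdd (ZMod 2) (V 2 3) w)⁻¹) • cubicComplement w = cubicComplement w' := by
  rw [cubicComplement, map_mul, map_inv, mul_smul, inv_smul_smul, cubicComplement]

lemma exists_cubicComplement_eq {G : Subgroup (Aff 2 3)} (hG : ActsTransitively G)
    (e : G ≃* (V 2 3 ≃ₗ[ZMod 2] V 2 3)) : ∃ w, cubicComplement w = G := by
  have : Finite (V 2 3 ≃ₗ[ZMod 2] V 2 3) := Finite.of_injective _ DFunLike.coe_injective
  have : Finite G := Finite.of_equiv _ e.symm.toEquiv
  have hinj := linearHom_comp_subtype_injective_of_mulEquiv e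
  have hsurj := (Finite.injective_iff_surjective_of_equiv e.toEquiv).1 hinj
  obtain ⟨σ, hσ, rfl⟩ := exists_isCocycle₁_affineComplement_eq ⟨hinj, hsurj⟩
  obtain ⟨c, hc⟩ := exists_isCoboundary₁_sub_smul_cubicCocycle hσ
  obtain rfl | rfl := eq_zero_or_one_of_zmod_two c
  · rw [zero_smul, sub_zero] at hc
    exact absurd hG (not_actsTransitively_of_isCoboundary₁ hσ hc)
  · rw [one_smul] at hc
    exact exists_conj_smul_affineComplement_eq _ hσ hc

/-- The general linear group as a group of invertible matrices or of linear automorphisms. -/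
def matrixGLEquiv : Matrix.GeneralLinearGroup (Fin 3) (ZMod 2) ≃* (V 2 3 ≃ₗ[ZMod 2] V 2 3) :=
  Matrix.GeneralLinearGroup.toLin.trans
    (LinearMap.GeneralLinearGroup.generalLinearEquiv (ZMod 2) (V 2 3))

lemma nonempty_cubicComplement_mulEquiv (w : V 2 3) :
    Nonempty (cubicComplement w ≃* Matrix.GeneralLinearGroup (Fin 3) (ZMod 2)) :=
  ⟨(Subgroup.equivSMul _ _).symm.trans <| (affineComplementEquiv _).trans matrixGLEquiv.symm⟩

lemma actsTransitively_and_mulEquiv_iff (G : Subgroup (Aff 2 3)) :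
    (ActsTransitively G ∧ Nonempty (G ≃* Matrix.GeneralLinearGroup (Fin 3) (ZMod 2))) ↔
      ∃ w, cubicComplement w = G := by
  constructor
  · rintro ⟨hG, ⟨e⟩⟩
    exact exists_cubicComplement_eq hG (e.trans matrixGLEquiv)
  · rintro ⟨w, rfl⟩
    exact ⟨actsTransitively_cubicComplement w, nonempty_cubicComplement_mulEquiv w⟩

end TransitiveSubgroups

/-- Lemma 4.1: for `V = 𝔽₂³`, the affine group `Aff(V)` contains exactly `8`
transitive subgroups isomorphic to the simple group `GL₃(𝔽₂)` of order `168`, and any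
two such subgroups are conjugate by an element of `GL(V) ≤ Aff(V)`. -/
theorem stmt_9 :
    Nat.card {G : Subgroup (Aff 2 3) //
        (∀ v w : V 2 3, ∃ g ∈ G, g v = w) ∧
        Nonempty (G ≃* Matrix.GeneralLinearGroup (Fin 3) (ZMod 2))} = 8 ∧
    ∀ G₁ G₂ : Subgroup (Aff 2 3),
      ((∀ v w : V 2 3, ∃ g ∈ G₁, g v = w) ∧
        Nonempty (G₁ ≃* Matrix.GeneralLinearGroup (Fin 3) (ZMod 2))) →
      ((∀ v w : V 2 3, ∃ g ∈ G₂, g v = w) ∧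
        Nonempty (G₂ ≃* Matrix.GeneralLinearGroup (Fin 3) (ZMod 2))) →
      ∃ A : V 2 3 ≃ₗ[ZMod 2] V 2 3,
        Subgroup.map (MulAut.conj A.toAffineEquiv).toMonoidHom G₁ = G₂ := by
  constructor
  · calc
      _ = Nat.card (Set.range cubicComplement) :=
        Nat.card_congr (Equiv.subtypeEquivRight actsTransitively_and_mulEquiv_iff)
      _ = Nat.card (V 2 3) := Nat.card_range_of_injective cubicComplement_injective
      _ = 8 := by simp
  · intro G₁ G₂ h₁ h₂
    obtain ⟨w₁, rfl⟩ := (actsTransitively_and_mulEquiv_iff G₁).1 h₁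
    obtain ⟨w₂, rfl⟩ := (actsTransitively_and_mulEquiv_iff G₂).1 h₂
    exact (actsTransitively_cubicComplement w₂).exists_linear_conj (conj_smul_cubicComplement w₁ w₂)
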